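/- Let 𝒯 be an admissible T-mesh. If 𝒯 is strongly dual-compatible (SDC), then 𝒯 is weakly dual-compatible (WDC); that is, if any two distinct anchors strongly partially overlap, then any two distinct anchors weakly partially overlap. -/

import Mathlib

/-!
The components of every entity of a T-mesh are points or dyadic subintervals of the initial
intervals, and the closure of an entity contains every entity it meets; both properties survive
bisections (`MeshInv`, `meshInv_step`). Consequently, for an entity `E` with `E_k = (a, b)`, the
end points `a`, `b` are knots of `gv_k(E)` (`mem_gv_of_frontier`), while no integer strictly
between them is (`not_mem_gv`). Together with the frame knots given by admissibility this shows
that local knot vectors of anchors exist (`isAnchorKV_anchorKV`), and that `v_k(A)` determines the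
component `A_k` (`comp_eq_of_anchorKV_eq`).

Let `A ≠ B` be anchors. If the supports are disjoint, then in some direction the convex hulls of
the local knot vectors are disjoint, so these differ, and they are blocks of their union.
Otherwise there is a direction `j` such that all directions `k ≠ j` overlap. If the knot vectors
agreed in every overlapping direction, then `A_k = B_k` for all `k ≠ j`. Since `gv_j` does not
depend on the `j`-th component, `v_j(A)` and `v_j(B)` would be blocks of the same global knot
vector, hence overlap, hence be equal, and then also `A_j = B_j`, contradicting `A ≠ B`.
-/

open Set

namespace TSpline

/-- A box in `ℝ^d`, given componentwise. -/
abbrev Box (d : ℕ) := Fin d → Set ℝ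

/-- The subset of `ℝ^d` determined by a box. -/
def toSet {d : ℕ} (E : Box d) : Set (Fin d → ℝ) := Set.pi Set.univ E

/-- The closed index domain `cl Ω = ∏ₖ [0, Nₖ]`. -/
def domain {d : ℕ} (N : Fin d → ℕ) : Set (Fin d → ℝ) :=
  Set.pi Set.univ (fun k => Set.Icc (0 : ℝ) (N k))

/-- The boundary `∂Ω` of the index domain. -/
def bdryDomain {d : ℕ} (N : Fin d → ℕ) : Set (Fin d → ℝ) := frontier (domain N)

/-- A component which is an integer singleton `{n}`, `0 ≤ n ≤ Nₖ`. -/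
def IsSingletonComp (Nk : ℕ) (S : Set ℝ) : Prop :=
  ∃ n : ℕ, n ≤ Nk ∧ S = {(n : ℝ)}

/-- A component which is an open interval with integer endpoints in `[0, Nₖ]`. -/
def IsIntervalComp (Nk : ℕ) (S : Set ℝ) : Prop :=
  ∃ a b : ℕ, a < b ∧ b ≤ Nk ∧ S = Set.Ioo (a : ℝ) (b : ℝ)

/-- A mesh entity: every component is an integer singleton or an open integer interval. -/
def IsMeshEntity {d : ℕ} (N : Fin d → ℕ) (E : Box d) : Prop :=
  ∀ k, IsSingletonComp (N k) (E k) ∨ IsIntervalComp (N k) (E k)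

/-- The directions in which an entity has a singleton component. -/
def singDirs {d : ℕ} (E : Box d) : Set (Fin d) := {i | ∃ r : ℝ, E i = {r}}

/-- Split all entities of `M` contained in the region `D` whose `j`-th component is `Q j`
into the three children obtained by bisecting the `j`-th component at `m`. -/
def midSplit {d : ℕ} (M : Set (Box d)) (Q : Box d) (j : Fin d) (m : ℝ) (D : Box d) :
    Set (Box d) :=
  (M \ {E | E ∈ M ∧ (∀ k, E k ⊆ D k) ∧ E j = Q j}) ∪
  ⋃ E ∈ {E | E ∈ M ∧ (∀ k, E k ⊆ D k) ∧ E j = Q j},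
    ({Function.update E j (Set.Ioo (sInf (Q j)) m),
      Function.update E j {m},
      Function.update E j (Set.Ioo m (sSup (Q j)))} : Set (Box d))

/-- One symmetric bisection of a `d`-dimensional cell with integer midpoint. -/
def BisectStep {d : ℕ} (N : Fin d → ℕ) (M M' : Set (Box d)) : Prop :=
  ∃ Q ∈ M, ∃ j : Fin d, ∃ a b mid : ℕ,
    (∀ k, IsIntervalComp (N k) (Q k)) ∧
    Q j = Set.Ioo (a : ℝ) (b : ℝ) ∧ a + b = 2 * mid ∧
    M' = midSplit M Q j (mid : ℝ) (fun k => closure (Q k))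

/-- A tensor-product mesh with integer breakpoints. -/
def IsTensorMesh {d : ℕ} (N : Fin d → ℕ) (M : Set (Box d)) : Prop :=
  ∃ G : Fin d → Finset ℕ,
    (∀ k, 0 ∈ G k ∧ N k ∈ G k ∧ ∀ n ∈ G k, n ≤ N k) ∧
    M = {E | ∀ k, (∃ n ∈ G k, E k = {(n : ℝ)}) ∨
          (∃ a ∈ G k, ∃ b ∈ G k, a < b ∧ (∀ c ∈ G k, c ≤ a ∨ b ≤ c) ∧
            E k = Set.Ioo (a : ℝ) (b : ℝ))}

/-- A T-mesh of the index domain: a finite disjoint partition of `cl Ω` into mesh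
entities, obtained from a tensor-product mesh by repeated symmetric bisections. -/
structure TMesh (d : ℕ) (N : Fin d → ℕ) where
  entities : Set (Box d)
  finite : entities.Finite
  mem_entity : ∀ E ∈ entities, IsMeshEntity N E
  union_eq : (⋃ E ∈ entities, toSet E) = domain N
  pairwise_disjoint : ∀ E ∈ entities, ∀ F ∈ entities, E ≠ F → toSet E ∩ toSet F = ∅
  constructed : ∃ M₀ : Set (Box d), IsTensorMesh N M₀ ∧
    Relation.ReflTransGen (BisectStep N) M₀ entities

variable {d : ℕ} {N : Fin d → ℕ}

/-- `H^k`: the entities with exactly `d - k` singleton components. -/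
def Hdim (T : TMesh d N) (k : ℕ) : Set (Box d) :=
  {E ∈ T.entities | (singDirs E).ncard = d - k}

/-- The `j`-orthogonal skeleton `Sk_j`. -/
def skel (T : TMesh d N) (j : Fin d) : Set (Fin d → ℝ) :=
  ⋃ F ∈ {F ∈ Hdim T (d - 1) | ∃ r : ℝ, F j = {r}}, closure (toSet F)

/-- The valence of a `(d-2)`-dimensional entity: the number of hyperfaces in whose
boundary it lies. -/
noncomputable def valence (T : TMesh d N) (J : Box d) : ℕ :=
  {F ∈ Hdim T (d - 1) | toSet J ⊆ frontier (toSet F)}.ncard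

/-- A T-junction (hanging interface). -/
def IsTJunction (T : TMesh d N) (J : Box d) : Prop :=
  J ∈ Hdim T (d - 2) ∧ ¬ toSet J ⊆ bdryDomain N ∧ valence T J < 4

/-- `TJData T J Q i j`: `Q` is an associated cell of the T-junction `J`, with orthogonal
direction `i` and pointing direction `j`. -/
def TJData (T : TMesh d N) (J Q : Box d) (i j : Fin d) : Prop :=
  Q ∈ Hdim T d ∧ toSet J ⊆ frontier (toSet Q) ∧
  closure (toSet J) ∩ Set.pi Set.univ (fun k => frontier (Q k)) = ∅ ∧
  i ≠ j ∧ (∃ r : ℝ, J i = {r}) ∧ (∃ r : ℝ, J j = {r}) ∧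
  J i ⊆ Q i ∧ J i ≠ Q i ∧ J j ⊆ frontier (Q j)

/-- `⌊(p_k + 1)/2⌋`. -/
def halfdeg (p : Fin d → ℕ) (k : Fin d) : ℕ := (p k + 1) / 2

/-- The active region `AR_p`. -/
def activeRegion (N p : Fin d → ℕ) : Set (Fin d → ℝ) :=
  Set.pi Set.univ (fun k => Set.Icc (halfdeg p k : ℝ) ((N k : ℝ) - (halfdeg p k : ℝ)))

/-- The slice `S_k(n)`. -/
def slice (N : Fin d → ℕ) (k : Fin d) (n : ℕ) : Set (Fin d → ℝ) :=
  {x ∈ domain N | x k = (n : ℝ)}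

/-- The `k`-th frame region `FR^(k)`. -/
def frameRegion (N p : Fin d → ℕ) (k : Fin d) : Set (Fin d → ℝ) :=
  {x ∈ domain N | x k ∈ Set.Icc (0 : ℝ) (halfdeg p k : ℝ) ∪
      Set.Icc ((N k : ℝ) - (halfdeg p k : ℝ)) (N k : ℝ)}

/-- Admissibility of a T-mesh. -/
def Admissible (p : Fin d → ℕ) (T : TMesh d N) : Prop :=
  (∀ k : Fin d, ∀ J Q : Box d, ∀ i j : Fin d, IsTJunction T J → TJData T J Q i j →
      (i = k ∨ j = k) → ¬ toSet J ⊆ frameRegion N p k) ∧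
  (∀ k : Fin d, ∀ n : ℕ, (n ≤ halfdeg p k ∨ (N k - halfdeg p k ≤ n ∧ n ≤ N k)) →
      slice N k n ⊆ skel T k)

/-- Anchors of degree `p`. -/
def IsAnchor (p : Fin d → ℕ) (T : TMesh d N) (A : Box d) : Prop :=
  A ∈ T.entities ∧ toSet A ⊆ activeRegion N p ∧
  ∀ j : Fin d, (∃ r : ℝ, A j = {r}) ↔ Odd (p j)

/-- `P_{j,n}(E)`: replace the `j`-th component of `E` by `{n}`. -/
def proj {d : ℕ} (E : Box d) (j : Fin d) (n : ℕ) : Box d :=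
  Function.update E j {(n : ℝ)}

/-- The global knot vector `gv_j(E)` (as a set of integer indices). -/
def gv (T : TMesh d N) (j : Fin d) (E : Box d) : Set ℕ :=
  {n | n ≤ N j ∧ toSet (proj E j n) ⊆ skel T j}

/-- `V` is a block of consecutive entries of `G`. -/
def IsBlockOf (V G : Set ℕ) : Prop :=
  V ⊆ G ∧ V.Finite ∧ ∀ g ∈ G, ∀ a ∈ V, ∀ b ∈ V, a ≤ g → g ≤ b → g ∈ V

/-- Two knot vectors overlap (`⋈`): both occur as blocks of consecutive entries of a
common knot vector. -/
def Overlaps (V₁ V₂ : Set ℕ) : Prop :=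
  ∃ W : Set ℕ, W.Finite ∧ IsBlockOf V₁ W ∧ IsBlockOf V₂ W

/-- The convex hull in `ℝ` of a set of integer indices. -/
def convOf (V : Set ℕ) : Set ℝ := convexHull ℝ ((fun n : ℕ => (n : ℝ)) '' V)

/-- The local knot vector of an anchor `A` in direction `j`: the block of `p_j + 2`
consecutive entries of `gv_j(A)` whose entry of rank `⌊(p_j+1)/2⌋` is `inf A_j`. -/
def IsAnchorKV (T : TMesh d N) (p : Fin d → ℕ) (A : Box d) (j : Fin d) (V : Set ℕ) : Prop :=
  IsBlockOf V (gv T j A) ∧ V.ncard = p j + 2 ∧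
  ∃ a : ℕ, (a : ℝ) = sInf (A j) ∧ a ∈ V ∧ {v ∈ V | v < a}.ncard = halfdeg p j

open Classical in
noncomputable def anchorKV (T : TMesh d N) (p : Fin d → ℕ) (A : Box d) (j : Fin d) :
    Set ℕ :=
  if h : ∃ V, IsAnchorKV T p A j V then h.choose else ∅

/-- The index support of an anchor. -/
noncomputable def suppA (T : TMesh d N) (p : Fin d → ℕ) (A : Box d) : Set (Fin d → ℝ) :=
  Set.pi Set.univ (fun k => convOf (anchorKV T p A k))

/-- The local knot vector of a T-junction `J` (with associated cell `Q`, orthogonal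
direction `i`, pointing direction `j`) in direction `k`. -/
def IsTJKV (T : TMesh d N) (p : Fin d → ℕ) (J Q : Box d) (i j k : Fin d) (V : Set ℕ) :
    Prop :=
  if k = i then ∃ t : ℕ, J i = {(t : ℝ)} ∧ V = {t}
  else if k = j then
    IsBlockOf V (gv T j J) ∧ V.ncard = p j + 1 ∧
    ((Even (p j) ∧ ∃ t : ℕ, J j = {(t : ℝ)} ∧ t ∈ V ∧ {v ∈ V | v < t}.ncard = p j / 2) ∨
     (Odd (p j) ∧ ∃ a b : ℕ, (a : ℝ) = sInf (Q j) ∧ (b : ℝ) = sSup (Q j) ∧ a ∈ V ∧ b ∈ V ∧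
        {v ∈ V | v < a}.ncard = p j / 2 ∧ {v ∈ V | v < b}.ncard = p j / 2 + 1))
  else
    IsBlockOf V (gv T k J) ∧ V.ncard = p k + 2 + p k % 2 ∧
    ∃ a b : ℕ, a ∈ V ∧ b ∈ V ∧ J k = Set.Ioo (a : ℝ) (b : ℝ) ∧
      {v ∈ V | v < a}.ncard = (p k + 1) / 2 ∧ {v ∈ V | v < b}.ncard = (p k + 1) / 2 + 1

/-- Local knot vector of a T-junction, quantifying over the (unique) associated data. -/
def IsTJKVFull (T : TMesh d N) (p : Fin d → ℕ) (J : Box d) (k : Fin d) (V : Set ℕ) :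
    Prop :=
  ∃ Q : Box d, ∃ i j : Fin d, TJData T J Q i j ∧ IsTJKV T p J Q i j k V

open Classical in
noncomputable def tjKV (T : TMesh d N) (p : Fin d → ℕ) (J : Box d) (k : Fin d) : Set ℕ :=
  if h : ∃ V, IsTJKVFull T p J k V then h.choose else ∅

/-- The geometric T-junction extension `GTJ(J)`. -/
noncomputable def GTJ (T : TMesh d N) (p : Fin d → ℕ) (J : Box d) : Set (Fin d → ℝ) :=
  Set.pi Set.univ (fun k => convOf (tjKV T p J k))

/-- `J` is a T-junction with orthogonal direction `i` and pointing direction `j`. -/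
def HasDirs (T : TMesh d N) (J : Box d) (i j : Fin d) : Prop :=
  IsTJunction T J ∧ ∃ Q : Box d, TJData T J Q i j

/-- Strong geometric analysis-suitability. -/
def SGAS (T : TMesh d N) (p : Fin d → ℕ) : Prop :=
  ∀ J₁ J₂ : Box d, ∀ i₁ j₁ i₂ j₂ : Fin d,
    HasDirs T J₁ i₁ j₁ → HasDirs T J₂ i₂ j₂ → i₁ ≠ i₂ →
    GTJ T p J₁ ∩ GTJ T p J₂ = ∅

/-- Weak geometric analysis-suitability. -/
def WGAS (T : TMesh d N) (p : Fin d → ℕ) : Prop :=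
  ∀ J₁ J₂ : Box d, ∀ i₁ j₁ i₂ j₂ : Fin d,
    HasDirs T J₁ i₁ j₁ → HasDirs T J₂ i₂ j₂ → i₁ ≠ i₂ → j₁ ≠ j₂ →
    GTJ T p J₁ ∩ GTJ T p J₂ = ∅

/-- The abstract T-junction extension `ATJ_j(n)`. -/
noncomputable def ATJ (T : TMesh d N) (p : Fin d → ℕ) (j : Fin d) (n : ℕ) :
    Set (Fin d → ℝ) :=
  slice N j n ∩
  (⋃ A ∈ {A : Box d | IsAnchor p T A ∧ n ∈ gv T j A}, suppA T p A) ∩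
  (⋃ A ∈ {A : Box d | IsAnchor p T A ∧ n ∉ gv T j A}, suppA T p A)

/-- `ATJ_j = ⋃ₙ ATJ_j(n)`. -/
noncomputable def ATJfull (T : TMesh d N) (p : Fin d → ℕ) (j : Fin d) :
    Set (Fin d → ℝ) :=
  ⋃ n ∈ Set.Iic (N j), ATJ T p j n

/-- Abstract analysis-suitability. -/
def AAS (T : TMesh d N) (p : Fin d → ℕ) : Prop :=
  ∀ i j : Fin d, i ≠ j → ∀ n m : ℕ, n ≤ N i → m ≤ N j →
    ATJ T p i n ∩ ATJ T p j m = ∅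

/-- Two anchors weakly partially overlap. -/
def WeakPartOverlap (T : TMesh d N) (p : Fin d → ℕ) (A₁ A₂ : Box d) : Prop :=
  ∃ ℓ : Fin d, anchorKV T p A₁ ℓ ≠ anchorKV T p A₂ ℓ ∧
    Overlaps (anchorKV T p A₁ ℓ) (anchorKV T p A₂ ℓ)

/-- Two anchors strongly partially overlap. -/
def StrongPartOverlap (T : TMesh d N) (p : Fin d → ℕ) (A₁ A₂ : Box d) : Prop :=
  suppA T p A₁ ∩ suppA T p A₂ = ∅ ∨
  d - 1 ≤ {k : Fin d | Overlaps (anchorKV T p A₁ k) (anchorKV T p A₂ k)}.ncard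

/-- Weak dual-compatibility. -/
def WDC (T : TMesh d N) (p : Fin d → ℕ) : Prop :=
  ∀ A₁ A₂ : Box d, IsAnchor p T A₁ → IsAnchor p T A₂ → A₁ ≠ A₂ →
    WeakPartOverlap T p A₁ A₂

/-- Strong dual-compatibility. -/
def SDC (T : TMesh d N) (p : Fin d → ℕ) : Prop :=
  ∀ A₁ A₂ : Box d, IsAnchor p T A₁ → IsAnchor p T A₂ → A₁ ≠ A₂ →
    StrongPartOverlap T p A₁ A₂

/-- `Q'` is a neighboring cell of `Q` in direction `ℓ`. -/
def NeighborInDir (T : TMesh d N) (Q Q' : Box d) (ℓ : Fin d) : Prop :=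
  Q' ∈ Hdim T d ∧ Q' ≠ Q ∧
  (sSup (Q ℓ) = sInf (Q' ℓ) ∨ sSup (Q' ℓ) = sInf (Q ℓ)) ∧
  ∀ k : Fin d, k ≠ ℓ → (Q k ∩ Q' k).Nonempty

/-- Assumption A: every cell has neighbor cells in the active region in at least three
pairwise distinct directions. -/
def AssumptionA (T : TMesh d N) (p : Fin d → ℕ) : Prop :=
  ∀ Q ∈ Hdim T d, ∃ l₁ l₂ l₃ : Fin d, l₁ ≠ l₂ ∧ l₁ ≠ l₃ ∧ l₂ ≠ l₃ ∧
    ∀ l ∈ ({l₁, l₂, l₃} : Set (Fin d)),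
      ∃ Q' : Box d, NeighborInDir T Q Q' l ∧ toSet Q' ⊆ activeRegion N p

/-- The extended region `D` of Algorithm `subdiv`. -/
def extendD (N p : Fin d → ℕ) (Q : Box d) (j : Fin d) : Box d := fun ℓ =>
  closure (Q ℓ) ∪
  {x : ℝ | ℓ ≠ j ∧ sInf (Q ℓ) = (halfdeg p ℓ : ℝ) ∧
      x ∈ Set.Icc (0 : ℝ) (halfdeg p ℓ : ℝ)} ∪
  {x : ℝ | ℓ ≠ j ∧ sSup (Q ℓ) = (N ℓ : ℝ) - (halfdeg p ℓ : ℝ) ∧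
      x ∈ Set.Icc ((N ℓ : ℝ) - (halfdeg p ℓ : ℝ)) (N ℓ : ℝ)}

/-- The entity set produced by Algorithm `subdiv(𝒯, Q, j)`. -/
def subdivEntities (N p : Fin d → ℕ) (M : Set (Box d)) (Q : Box d) (j : Fin d) :
    Set (Box d) :=
  midSplit M Q j ((sInf (Q j) + sSup (Q j)) / 2) (extendD N p Q j)

open Classical in
/-- The componentwise minimal bounding box `M(E,F)`. -/
noncomputable def MBox {d : ℕ} (E F : Box d) : Box d := fun ℓ =>
  if (E ℓ ∩ F ℓ).Nonempty then E ℓ ∩ F ℓ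
  else if sSup (E ℓ) ≤ sInf (F ℓ) then Set.Icc (sSup (E ℓ)) (sInf (F ℓ))
  else Set.Icc (sSup (F ℓ)) (sInf (E ℓ))

/-- `V` is the local knot vector of `E` (an anchor or a T-junction) in direction `j`. -/
def IsLocalKVOf (T : TMesh d N) (p : Fin d → ℕ) (E : Box d) (j : Fin d) (V : Set ℕ) :
    Prop :=
  (IsAnchor p T E ∧ IsAnchorKV T p E j V) ∨
  (IsTJunction T E ∧ IsTJKVFull T p E j V)

end TSpline

namespace TSpline

/-! ### Dyadic intervals -/

/-- `Dyadic G n a b`: the interval `(a, b)` arises by `n` successive halvings from an interval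
between two neighbouring elements of `G`. -/
inductive Dyadic (G : Finset ℕ) : ℕ → ℝ → ℝ → Prop
  | base (a b : ℕ) (ha : a ∈ G) (hb : b ∈ G) (hab : a < b) (h : ∀ c ∈ G, c ≤ a ∨ b ≤ c) :
      Dyadic G 0 a b
  | left (n : ℕ) (a b : ℝ) (h : Dyadic G n a b) : Dyadic G (n + 1) a ((a + b) / 2)
  | right (n : ℕ) (a b : ℝ) (h : Dyadic G n a b) : Dyadic G (n + 1) ((a + b) / 2) b

lemma Dyadic.lt {G : Finset ℕ} {n : ℕ} {a b : ℝ} (h : Dyadic G n a b) : a < b := by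
  induction h with
  | base a b ha hb hab h => exact_mod_cast hab
  | left n a b h ih => linarith
  | right n a b h ih => linarith

lemma Dyadic.succ {G : Finset ℕ} {n : ℕ} {c d : ℝ} (h : Dyadic G (n + 1) c d) :
    ∃ a b, Dyadic G n a b ∧ ((c = a ∧ d = (a + b) / 2) ∨ (c = (a + b) / 2 ∧ d = b)) := by
  cases h with
  | left _ a b h => exact ⟨c, b, h, Or.inl ⟨rfl, rfl⟩⟩
  | right _ a b h => exact ⟨a, d, h, Or.inr ⟨rfl, rfl⟩⟩

lemma Dyadic.same_level {G : Finset ℕ} {n : ℕ} {a b c d : ℝ} (h : Dyadic G n a b)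
    (h' : Dyadic G n c d) : (a = c ∧ b = d) ∨ b ≤ c ∨ d ≤ a := by
  induction n generalizing a b c d with
  | zero =>
    cases h with
    | base a b ha hb hab h =>
      cases h' with
      | base c d hc hd hcd h' =>
        have h1 := h c hc
        have h2 := h d hd
        have h3 := h' a ha
        have h4 := h' b hb
        have : (a = c ∧ b = d) ∨ b ≤ c ∨ d ≤ a := by omega
        exact_mod_cast this
  | succ n ih =>
    obtain ⟨a', b', hp, hc⟩ := h.succ
    obtain ⟨c', d', hp', hc'⟩ := h'.succ
    have l1 := hp.lt
    have l2 := hp'.lt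
    rcases ih hp hp' with ⟨rfl, rfl⟩ | h1 | h1
    · rcases hc with ⟨rfl, rfl⟩ | ⟨rfl, rfl⟩ <;> rcases hc' with ⟨rfl, rfl⟩ | ⟨rfl, rfl⟩ <;> simp
    · right; left
      rcases hc with ⟨rfl, rfl⟩ | ⟨rfl, rfl⟩ <;> rcases hc' with ⟨rfl, rfl⟩ | ⟨rfl, rfl⟩ <;>
        linarith
    · right; right
      rcases hc with ⟨rfl, rfl⟩ | ⟨rfl, rfl⟩ <;> rcases hc' with ⟨rfl, rfl⟩ | ⟨rfl, rfl⟩ <;>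
        linarith

lemma Dyadic.deeper {G : Finset ℕ} {n k : ℕ} {a b c d : ℝ} (h : Dyadic G n a b)
    (h' : Dyadic G (n + 1 + k) c d) :
    b ≤ c ∨ d ≤ a ∨ (a ≤ c ∧ d ≤ (a + b) / 2) ∨ ((a + b) / 2 ≤ c ∧ d ≤ b) := by
  have l := h.lt
  induction k generalizing c d with
  | zero =>
    obtain ⟨c', d', hp, hc⟩ := h'.succ
    have l' := hp.lt
    rcases h.same_level hp with ⟨rfl, rfl⟩ | h1 | h1
    · rcases hc with ⟨rfl, rfl⟩ | ⟨rfl, rfl⟩ <;> simp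
    · left; rcases hc with ⟨rfl, rfl⟩ | ⟨rfl, rfl⟩ <;> linarith
    · right; left; rcases hc with ⟨rfl, rfl⟩ | ⟨rfl, rfl⟩ <;> linarith
  | succ k ih =>
    obtain ⟨c', d', hp, hc⟩ := Dyadic.succ (n := n + 1 + k) h'
    have l' := hp.lt
    have hc1 : c' ≤ c := by rcases hc with ⟨rfl, rfl⟩ | ⟨rfl, rfl⟩ <;> linarith
    have hd1 : d ≤ d' := by rcases hc with ⟨rfl, rfl⟩ | ⟨rfl, rfl⟩ <;> linarith
    rcases ih hp with h1 | h1 | ⟨h1, h2⟩ | ⟨h1, h2⟩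
    · left; linarith
    · right; left; linarith
    · right; right; left; constructor <;> linarith
    · right; right; right; constructor <;> linarith

/-- A dyadic interval properly contained in another one lies in one of its halves. -/
lemma Dyadic.half {G : Finset ℕ} {n n' : ℕ} {a b c d : ℝ} (h : Dyadic G n a b)
    (h' : Dyadic G n' c d) (hac : a ≤ c) (hdb : d ≤ b) (hne : ¬ (a = c ∧ b = d)) :
    d ≤ (a + b) / 2 ∨ (a + b) / 2 ≤ c := by
  have l := h.lt
  have l' := h'.lt
  rcases lt_trichotomy n n' with hn | rfl | hn
  · obtain ⟨k, rfl⟩ := Nat.exists_eq_add_of_lt hn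
    rw [show n + k + 1 = n + 1 + k by omega] at h'
    rcases h.deeper h' with h1 | h1 | ⟨h1, h2⟩ | ⟨h1, h2⟩
    · linarith
    · linarith
    · exact Or.inl h2
    · exact Or.inr h1
  · rcases h.same_level h' with h1 | h1 | h1
    · exact absurd h1 hne
    · linarith
    · linarith
  · obtain ⟨k, rfl⟩ := Nat.exists_eq_add_of_lt hn
    rw [show n' + k + 1 = n' + 1 + k by omega] at h
    rcases h'.deeper h with h1 | h1 | ⟨h1, h2⟩ | ⟨h1, h2⟩ <;> linarith

/-! ### Invariants of the bisection process -/

lemma Ioo_ne_singleton {a b : ℝ} (h : a < b) : ¬ ∃ r : ℝ, Set.Ioo a b = {r} := by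
  rintro ⟨r, hr⟩
  exact (Set.Ioo_infinite h) (hr ▸ Set.finite_singleton r)

/-- The `k`-orthogonal skeleton of a bare collection of boxes, described pointwise. -/
def skelOf {d : ℕ} (M : Set (Box d)) (k : Fin d) : Set (Fin d → ℝ) :=
  {x | ∃ F ∈ M, (∃ r : ℝ, F k = {r}) ∧ (∀ i, i ≠ k → ¬ ∃ r : ℝ, F i = {r}) ∧
    ∀ i, x i ∈ closure (F i)}

/-- The properties of a tensor-product mesh that are preserved by bisections:
components are points or dyadic intervals, the closure of an entity contains every entity
that it meets, and each entity projects into the skeleton at the end points of its components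
(`frontier (E k)` is `{r}` for a point `{r}` and `{a, b}` for an interval `(a, b)`). -/
structure MeshInv {d : ℕ} (G : Fin d → Finset ℕ) (M : Set (Box d)) : Prop where
  comp : ∀ E ∈ M, ∀ k, (∃ r : ℝ, E k = {r}) ∨ ∃ n a b, Dyadic (G k) n a b ∧ E k = Set.Ioo a b
  closed : ∀ E ∈ M, ∀ F ∈ M, (∀ k, (E k ∩ closure (F k)).Nonempty) → ∀ k, E k ⊆ closure (F k)
  edge : ∀ E ∈ M, ∀ k, ∀ x : Fin d → ℝ, x k ∈ frontier (E k) → (∀ i, i ≠ k → x i ∈ E i) →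
    x ∈ skelOf M k

lemma exists_gap {G : Finset ℕ} {m n : ℕ} (h0 : 0 ∈ G) (hm : m ∈ G) (hn : n ∈ G) (hpos : 0 < m)
    (hle : ∀ g ∈ G, g ≤ m) :
    ∃ a ∈ G, ∃ b ∈ G, a < b ∧ (∀ c ∈ G, c ≤ a ∨ b ≤ c) ∧ a ≤ n ∧ n ≤ b := by
  by_cases h : n < m
  · have hne : (G.filter (n < ·)).Nonempty := ⟨m, by simp [hm, h]⟩
    have h1 := Finset.min'_mem _ hne
    rw [Finset.mem_filter] at h1
    refine ⟨n, hn, _, h1.1, h1.2, fun c hc => ?_, le_rfl, h1.2.le⟩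
    by_contra! hcon
    exact absurd (Finset.min'_le _ c (by simp [hc, hcon.1])) (not_le.2 hcon.2)
  · obtain rfl : n = m := le_antisymm (hle n hn) (not_lt.mp h)
    have hne : (G.filter (· < n)).Nonempty := ⟨0, by simp [h0, hpos]⟩
    have h1 := Finset.max'_mem _ hne
    rw [Finset.mem_filter] at h1
    refine ⟨_, h1.1, n, hn, h1.2, fun c hc => ?_, h1.2.le, le_rfl⟩
    by_contra! hcon
    exact absurd (Finset.le_max' _ c (by simp [hc, hcon.2])) (not_le.2 hcon.1)

lemma meshInv_tensor {d : ℕ} {N : Fin d → ℕ} {G : Fin d → Finset ℕ}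
    (hN : ∀ k i : Fin d, i ≠ k → 0 < N i)
    (hG : ∀ k, 0 ∈ G k ∧ N k ∈ G k ∧ ∀ n ∈ G k, n ≤ N k) :
    MeshInv G {E : Box d | ∀ k, (∃ n ∈ G k, E k = {(n : ℝ)}) ∨
          (∃ a ∈ G k, ∃ b ∈ G k, a < b ∧ (∀ c ∈ G k, c ≤ a ∨ b ≤ c) ∧
            E k = Set.Ioo (a : ℝ) (b : ℝ))} where
  comp := by
    intro E hE k
    rcases hE k with ⟨n, -, h⟩ | ⟨a, ha, b, hb, hab, hc, h⟩
    · exact Or.inl ⟨_, h⟩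
    · exact Or.inr ⟨0, a, b, .base a b ha hb hab hc, h⟩
  closed := by
    intro E hE F hF hne k
    obtain ⟨x, hx, hx'⟩ := hne k
    rcases hE k with ⟨n, -, h⟩ | ⟨a, ha, b, hb, hab, hc, h⟩
    · rw [h] at hx ⊢
      rw [Set.mem_singleton_iff] at hx
      subst hx
      simpa using hx'
    · rw [h] at hx ⊢
      rcases hF k with ⟨n, hn, h'⟩ | ⟨a', ha', b', hb', hab', hc', h'⟩
      · rw [h', closure_singleton, Set.mem_singleton_iff] at hx'
        subst hx'
        obtain ⟨h1, h2⟩ := hx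
        rw [Nat.cast_lt] at h1 h2
        rcases hc n hn with h3 | h3 <;> omega
      · have hlt : (a' : ℝ) ≠ b' := by exact_mod_cast hab'.ne
        rw [h', closure_Ioo hlt] at hx' ⊢
        have h1 : a' < b := by exact_mod_cast hx'.1.trans_lt hx.2
        have h2 : a < b' := by exact_mod_cast hx.1.trans_le hx'.2
        have h3 : a' ≤ a := by rcases hc a' ha' with h | h <;> omega
        have h4 : b ≤ b' := by rcases hc b' hb' with h | h <;> omega
        exact Set.Ioo_subset_Icc_self.trans
          (Set.Icc_subset_Icc (by exact_mod_cast h3) (by exact_mod_cast h4))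
  edge := by
    intro E hE k x hxk hx
    obtain ⟨r, hr, hxr⟩ : ∃ r ∈ G k, x k = (r : ℝ) := by
      rcases hE k with ⟨n, hn, h⟩ | ⟨a, ha, b, hb, hab, hc, h⟩
      · refine ⟨n, hn, ?_⟩
        rw [h] at hxk
        simpa using frontier_subset_closure hxk
      · rw [h, frontier_Ioo (by exact_mod_cast hab)] at hxk
        rcases hxk with h | h
        · exact ⟨a, ha, h⟩
        · exact ⟨b, hb, h⟩
    have key : ∀ i, i ≠ k → ∃ a ∈ G i, ∃ b ∈ G i, a < b ∧ (∀ c ∈ G i, c ≤ a ∨ b ≤ c) ∧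
        x i ∈ Set.Icc (a : ℝ) b := by
      intro i hi
      have hxi := hx i hi
      rcases hE i with ⟨n, hn, h⟩ | ⟨a, ha, b, hb, hab, hc, h⟩
      · obtain ⟨a, ha, b, hb, hab, hc, h1, h2⟩ :=
          exists_gap (hG i).1 (hG i).2.1 hn (hN k i hi) (hG i).2.2
        refine ⟨a, ha, b, hb, hab, hc, ?_⟩
        rw [h, Set.mem_singleton_iff] at hxi
        rw [hxi]
        exact ⟨by exact_mod_cast h1, by exact_mod_cast h2⟩
      · rw [h] at hxi
        exact ⟨a, ha, b, hb, hab, hc, Set.Ioo_subset_Icc_self hxi⟩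
    choose! a ha b hb hab hc hxi using key
    classical
    refine ⟨fun i => if i = k then {(r : ℝ)} else Set.Ioo (a i : ℝ) (b i), ?_, ?_, ?_, ?_⟩
    · intro i
      by_cases hi : i = k
      · subst hi
        exact Or.inl ⟨r, hr, by simp⟩
      · exact Or.inr ⟨a i, ha i hi, b i, hb i hi, hab i hi, hc i hi, by simp [hi]⟩
    · exact ⟨r, by simp⟩
    · intro i hi
      simp only [hi, if_false]
      exact Ioo_ne_singleton (by exact_mod_cast hab i hi)
    · intro i
      by_cases hi : i = k
      · subst hi
        simp [hxr]
      · simp only [hi, if_false]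
        rw [closure_Ioo (by exact_mod_cast (hab i hi).ne)]
        exact hxi i hi

/-- Bisection of the cell `Q` in direction `j` at its midpoint preserves the invariants. The
dyadic structure ensures that an entity inside `closure Q` that is not split does not
straddle the midpoint. -/
lemma meshInv_step {d : ℕ} {G : Fin d → Finset ℕ} {M : Set (Box d)} (hM : MeshInv G M)
    {Q : Box d} (hQ : Q ∈ M) {j : Fin d} {α β m : ℝ} (hαβ : α < β) (hm : m = (α + β) / 2)
    (hQj : Q j = Set.Ioo α β) (hQs : ∀ k, ¬ ∃ r : ℝ, Q k = {r}) :
    MeshInv G (midSplit M Q j m (fun k => closure (Q k))) := by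
  have hαm : α < m := by linarith
  have hmβ : m < β := by linarith
  have hclQ : closure (Q j) = Set.Icc α β := by rw [hQj, closure_Ioo hαβ.ne]
  set M' := midSplit M Q j m (fun k => closure (Q k)) with hMdef
  -- The entities that are split, and the three possible `j`-th components of their children.
  let Sp : Box d → Prop := fun E => (∀ k, E k ⊆ closure (Q k)) ∧ E j = Q j
  let C : Set (Set ℝ) := {Set.Ioo α m, {m}, Set.Ioo m β}
  have hmem : ∀ E', E' ∈ M' ↔ (E' ∈ M ∧ ¬ Sp E') ∨
      ∃ E ∈ M, Sp E ∧ ∃ c ∈ C, E' = Function.update E j c := by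
    intro E'
    simp only [hMdef, midSplit, hQj, csInf_Ioo hαβ, csSup_Ioo hαβ, Sp, C, Set.mem_union,
      Set.mem_sdiff, Set.mem_ofPred_eq, Set.mem_iUnion, Set.mem_insert_iff,
      Set.mem_singleton_iff, exists_eq_or_imp, exists_eq_left, exists_prop, and_assoc]
    refine or_congr ?_ Iff.rfl
    tauto
  have hCsub : ∀ c ∈ C, c ⊆ Set.Ioo α β := by
    rintro c (rfl | rfl | rfl)
    · exact Set.Ioo_subset_Ioo_right hmβ.le
    · exact Set.singleton_subset_iff.2 ⟨hαm, hmβ⟩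
    · exact Set.Ioo_subset_Ioo_left hαm.le
  -- Children are contained in their parents.
  have hchild : ∀ E, Sp E → ∀ c ∈ C, ∀ k, Function.update E j c k ⊆ E k := by
    intro E hE c hc k
    by_cases hk : k = j
    · subst hk
      rw [Function.update_self, hE.2, hQj]
      exact hCsub c hc
    · rw [Function.update_of_ne hk]
  -- Every entity of the new mesh is contained in one of the old mesh.
  have hparent : ∀ E' ∈ M', ∃ E ∈ M, (∀ k, E' k ⊆ E k) ∧ ∀ k, k ≠ j → E' k = E k := by
    intro E' hE'
    rcases (hmem E').1 hE' with ⟨h, -⟩ | ⟨E, hE, hs, c, hc, rfl⟩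
    · exact ⟨E', h, fun k => subset_rfl, fun k _ => rfl⟩
    · exact ⟨E, hE, hchild E hs c hc, fun k hk => Function.update_of_ne hk _ _⟩
  have hmono : ∀ k, skelOf M k ⊆ skelOf M' k := by
    rintro k x ⟨F, hF, ⟨r, hr⟩, hns, hx⟩
    by_cases hs : Sp F
    · have hkj : j ≠ k := by
        rintro rfl
        exact hQs j ⟨r, hs.2 ▸ hr⟩
      have hxj : x j ∈ Set.Icc α β := by
        have := hx j
        rwa [hs.2, hclQ] at this
      have : ∃ c ∈ C, (¬ ∃ r : ℝ, c = {r}) ∧ x j ∈ closure c := by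
        rcases le_total (x j) m with h | h
        · refine ⟨Set.Ioo α m, by simp [C], Ioo_ne_singleton hαm, ?_⟩
          rw [closure_Ioo hαm.ne]
          exact ⟨hxj.1, h⟩
        · refine ⟨Set.Ioo m β, by simp [C], Ioo_ne_singleton hmβ, ?_⟩
          rw [closure_Ioo hmβ.ne]
          exact ⟨h, hxj.2⟩
      obtain ⟨c, hc, hcs, hxc⟩ := this
      refine ⟨Function.update F j c, (hmem _).2 (Or.inr ⟨F, hF, hs, c, hc, rfl⟩), ⟨r, ?_⟩, ?_, ?_⟩
      · rw [Function.update_of_ne hkj.symm, hr]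
      · intro i hi
        by_cases hij : i = j
        · subst hij; rwa [Function.update_self]
        · rw [Function.update_of_ne hij]; exact hns i hi
      · intro i
        by_cases hij : i = j
        · subst hij; rwa [Function.update_self]
        · rw [Function.update_of_ne hij]; exact hx i
    · exact ⟨F, (hmem F).2 (Or.inl ⟨hF, hs⟩), ⟨r, hr⟩, hns, hx⟩
  refine ⟨?_, ?_, ?_⟩
  · intro E' hE' k
    rcases (hmem E').1 hE' with ⟨h, -⟩ | ⟨E, hE, hs, c, hc, rfl⟩
    · exact hM.comp E' h k
    · by_cases hk : k = j
      · subst hk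
        rw [Function.update_self]
        obtain ⟨n, a, b, hD, hab⟩ := (hM.comp Q hQ k).resolve_left (hQs k)
        obtain ⟨rfl, rfl⟩ : a = α ∧ b = β := by
          rw [hQj] at hab
          have h1 := congrArg sInf hab
          have h2 := congrArg sSup hab
          rw [csInf_Ioo hαβ, csInf_Ioo hD.lt] at h1
          rw [csSup_Ioo hαβ, csSup_Ioo hD.lt] at h2
          exact ⟨h1.symm, h2.symm⟩
        rcases hc with rfl | rfl | rfl
        · exact Or.inr ⟨n + 1, a, m, hm ▸ hD.left, rfl⟩
        · exact Or.inl ⟨m, rfl⟩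
        · exact Or.inr ⟨n + 1, m, b, hm ▸ hD.right, rfl⟩
      · rw [Function.update_of_ne hk]
        exact hM.comp E hE k
  · intro E' hE' F' hF' hne
    obtain ⟨E, hE, hEsub, hEeq⟩ := hparent E' hE'
    obtain ⟨F, hF, hFsub, hFeq⟩ := hparent F' hF'
    have hEF : ∀ k, E k ⊆ closure (F k) := hM.closed E hE F hF fun k =>
      (hne k).mono (Set.inter_subset_inter (hEsub k) (closure_mono (hFsub k)))
    intro k
    by_cases hk : k = j
    swap
    · rw [hEeq k hk, hFeq k hk]
      exact hEF k
    subst hk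
    rcases (hmem F').1 hF' with ⟨hF1, -⟩ | ⟨F1, hF1, hs, c, hc, rfl⟩
    · exact (hEsub k).trans (hM.closed E hE F' hF1 (fun i =>
        (hne i).mono (Set.inter_subset_inter_left _ (hEsub i))) k)
    obtain ⟨y, hy, hyc⟩ := hne k
    rw [Function.update_self] at hyc ⊢
    -- The `j`-th component of `E'` is a point or an open interval in one half of `(α, β)`.
    have hform : (∃ r, E' k = {r}) ∨ ∃ a b, E' k = Set.Ioo a b ∧ α ≤ a ∧ b ≤ β ∧
        (b ≤ m ∨ m ≤ a) := by
      rcases (hmem E').1 hE' with ⟨hE1, hns⟩ | ⟨E1, hE1, hs1, c1, hc1, rfl⟩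
      · refine (hM.comp E' hE1 k).imp id ?_
        rintro ⟨n, a, b, hD, hab⟩
        obtain ⟨n', a', b', hD', hab'⟩ := (hM.comp Q hQ k).resolve_left (hQs k)
        obtain ⟨rfl, rfl⟩ : a' = α ∧ b' = β := by
          rw [hQj] at hab'
          have h1 := congrArg sInf hab'
          have h2 := congrArg sSup hab'
          rw [csInf_Ioo hαβ, csInf_Ioo hD'.lt] at h1
          rw [csSup_Ioo hαβ, csSup_Ioo hD'.lt] at h2
          exact ⟨h1.symm, h2.symm⟩
        have hsubQ : ∀ i, E' i ⊆ closure (Q i) := by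
          have h1 := hM.closed E' hE1 F1 hF1 fun i => (hne i).mono
            (Set.inter_subset_inter_right _ (closure_mono (hchild F1 hs c hc i)))
          exact fun i => (h1 i).trans (closure_minimal (hs.1 i) isClosed_closure)
        have hsub := hsubQ k
        rw [hclQ, hab] at hsub
        have hsub' : Set.Icc a b ⊆ Set.Icc a' b' := by
          rw [← closure_Ioo hD.lt.ne]
          exact closure_minimal hsub isClosed_Icc
        obtain ⟨h1, h2⟩ := (Set.Icc_subset_Icc_iff hD.lt.le).1 hsub'
        refine ⟨a, b, hab, h1, h2, ?_⟩
        rw [hm]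
        refine hD'.half hD h1 h2 ?_
        rintro ⟨rfl, rfl⟩
        exact hns ⟨hsubQ, hab.trans hQj.symm⟩
      · rw [Function.update_self]
        rcases hc1 with rfl | rfl | rfl
        · exact Or.inr ⟨α, m, rfl, le_rfl, hmβ.le, Or.inl le_rfl⟩
        · exact Or.inl ⟨m, rfl⟩
        · exact Or.inr ⟨m, β, rfl, hαm.le, le_rfl, Or.inr le_rfl⟩
    rcases hform with ⟨r, hr⟩ | ⟨a, b, hab, h1, h2, h3⟩
    · rw [hr, Set.mem_singleton_iff] at hy
      subst hy
      rw [hr]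
      exact Set.singleton_subset_iff.2 hyc
    · rw [hab] at hy ⊢
      rcases hc with rfl | rfl | rfl
      · rw [closure_Ioo hαm.ne] at hyc ⊢
        rcases h3 with h3 | h3
        · exact Set.Ioo_subset_Icc_self.trans (Set.Icc_subset_Icc h1 h3)
        · linarith [hy.1, hyc.2]
      · rw [closure_singleton, Set.mem_singleton_iff] at hyc
        subst hyc
        rcases h3 with h3 | h3
        · linarith [hy.2]
        · linarith [hy.1]
      · rw [closure_Ioo hmβ.ne] at hyc ⊢
        rcases h3 with h3 | h3
        · linarith [hy.2, hyc.1]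
        · exact Set.Ioo_subset_Icc_self.trans (Set.Icc_subset_Icc h3 h2)
  · intro E' hE' k x hxk hx
    rcases (hmem E').1 hE' with ⟨h, -⟩ | ⟨E, hE, hs, c, hc, rfl⟩
    · exact hmono k (hM.edge E' h k x hxk hx)
    by_cases hk : k = j
    · subst hk
      rw [Function.update_self] at hxk
      have hx' : ∀ i, i ≠ k → x i ∈ E i := fun i hi => by
        have := hx i hi
        rwa [Function.update_of_ne hi] at this
      have hfr : x k = m ∨ x k ∈ frontier (E k) := by
        rw [hs.2, hQj, frontier_Ioo hαβ]
        rcases hc with rfl | rfl | rfl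
        · rw [frontier_Ioo hαm] at hxk
          rcases hxk with h | h
          · exact Or.inr (Or.inl h)
          · exact Or.inl h
        · left
          simpa using frontier_subset_closure hxk
        · rw [frontier_Ioo hmβ] at hxk
          rcases hxk with h | h
          · exact Or.inl h
          · exact Or.inr (Or.inr h)
      rcases hfr with h | h
      · refine ⟨Function.update Q k {m}, (hmem _).2 (Or.inr ⟨Q, hQ,
          ⟨fun i => subset_closure, rfl⟩, {m}, by simp [C], rfl⟩), ⟨m, by simp⟩, ?_, ?_⟩
        · intro i hi
          rw [Function.update_of_ne hi]
          exact hQs i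
        · intro i
          by_cases hi : i = k
          · subst hi
            simp [h]
          · rw [Function.update_of_ne hi]
            exact hs.1 i (hx' i hi)
      · exact hmono k (hM.edge E hE k x h hx')
    · rw [Function.update_of_ne hk] at hxk
      exact hmono k (hM.edge E hE k x hxk fun i hi => hchild E hs c hc i (hx i hi))

lemma TMesh.exists_meshInv {d : ℕ} {N : Fin d → ℕ} (hN : ∀ k i : Fin d, i ≠ k → 0 < N i)
    (T : TMesh d N) : ∃ G, MeshInv G T.entities := by
  obtain ⟨M₀, ⟨G, hG, hM₀⟩, hR⟩ := T.constructed
  refine ⟨G, ?_⟩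
  generalize T.entities = M at hR ⊢
  induction hR with
  | refl => exact hM₀ ▸ meshInv_tensor hN hG
  | tail _ hstep ih =>
    obtain ⟨Q, hQ, j, a, b, mid, hcell, hQj, hmid, rfl⟩ := hstep
    have hs : ∀ k, ¬ ∃ r : ℝ, Q k = {r} := by
      intro k
      obtain ⟨a, b, hab, -, h⟩ := hcell k
      rw [h]
      exact Ioo_ne_singleton (by exact_mod_cast hab)
    have hlt : (a : ℝ) < b := by
      obtain ⟨a', b', hab', -, h⟩ := hcell j
      rw [← Set.nonempty_Ioo, ← hQj, h, Set.nonempty_Ioo]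
      exact_mod_cast hab'
    refine meshInv_step ih hQ hlt ?_ hQj hs
    have : (a : ℝ) + b = 2 * mid := by exact_mod_cast hmid
    linarith

/-! ### Global knot vectors -/

lemma mem_closure_toSet {d : ℕ} {F : Box d} {x : Fin d → ℝ} :
    x ∈ closure (toSet F) ↔ ∀ i, x i ∈ closure (F i) := by
  rw [toSet, closure_pi_set]
  simp

lemma mem_toSet {d : ℕ} {F : Box d} {x : Fin d → ℝ} : x ∈ toSet F ↔ ∀ i, x i ∈ F i := by
  simp [toSet]

lemma skel_eq_skelOf {d : ℕ} {N : Fin d → ℕ} (T : TMesh d N) (k : Fin d) :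
    skel T k = skelOf T.entities k := by
  have hd : d - (d - 1) = 1 := by have := k.pos; omega
  ext x
  simp only [skel, Hdim, hd, Set.mem_iUnion, exists_prop, mem_closure_toSet, skelOf]
  constructor
  · rintro ⟨F, ⟨⟨hF, hc⟩, hr⟩, hx⟩
    refine ⟨F, hF, hr, fun i hi hs => hi ?_, hx⟩
    obtain ⟨a, ha⟩ := Set.ncard_eq_one.1 hc
    have h1 : i ∈ singDirs F := hs
    have h2 : k ∈ singDirs F := hr
    rw [ha, Set.mem_singleton_iff] at h1 h2
    rw [h1, h2]
  · rintro ⟨F, hF, hr, hs, hx⟩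
    refine ⟨F, ⟨⟨hF, Set.ncard_eq_one.2 ⟨k, ?_⟩⟩, hr⟩, hx⟩
    ext i
    rw [Set.mem_singleton_iff]
    constructor
    · intro h
      by_contra hi
      exact hs i hi h
    · rintro rfl
      exact hr

/-- Admissibility forces `N i > 0` as soon as there is a direction `k ≠ i`: the slice `x_k = 0`
is covered by hyperfaces, whose `i`-th component is a nonempty open interval in `(0, N i)`. -/
lemma Admissible.pos {d : ℕ} {N p : Fin d → ℕ} {T : TMesh d N} (h : Admissible p T)
    (k i : Fin d) (hik : i ≠ k) : 0 < N i := by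
  have h0 : (0 : Fin d → ℝ) ∈ slice N k 0 := by
    exact ⟨fun i _ => ⟨le_rfl, Nat.cast_nonneg _⟩, by simp⟩
  have h1 := h.2 k 0 (Or.inl (Nat.zero_le _)) h0
  rw [skel_eq_skelOf] at h1
  obtain ⟨F, hF, -, hs, -⟩ := h1
  rcases T.mem_entity F hF i with ⟨n, -, hn⟩ | ⟨a, b, hab, hb, -⟩
  · exact absurd ⟨_, hn⟩ (hs i hik)
  · omega

lemma gv_finite {d : ℕ} {N : Fin d → ℕ} (T : TMesh d N) (j : Fin d) (E : Box d) :
    (gv T j E).Finite :=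
  (Set.finite_Iic (N j)).subset fun _ h => h.1

lemma gv_congr {d : ℕ} {N : Fin d → ℕ} (T : TMesh d N) {j : Fin d} {E F : Box d}
    (h : ∀ k, k ≠ j → E k = F k) : gv T j E = gv T j F := by
  have : ∀ n, proj E j n = proj F j n := by
    intro n
    funext k
    by_cases hk : k = j
    · subst hk; simp [proj]
    · simp [proj, hk, h k hk]
  simp only [gv, this]

/-- Integer end points of a component of an entity are knots. -/
lemma mem_gv_of_frontier {d : ℕ} {N : Fin d → ℕ} {T : TMesh d N} {G : Fin d → Finset ℕ}
    (hG : MeshInv G T.entities) {E : Box d} (hE : E ∈ T.entities) {k : Fin d} {n : ℕ}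
    (hn : n ≤ N k) (hfr : (n : ℝ) ∈ frontier (E k)) : n ∈ gv T k E := by
  refine ⟨hn, fun x hx => ?_⟩
  rw [mem_toSet] at hx
  rw [skel_eq_skelOf]
  refine hG.edge E hE k x ?_ fun i hi => ?_
  · have := hx k
    simp only [proj, Function.update_self, Set.mem_singleton_iff] at this
    rwa [this]
  · have := hx i
    rwa [proj, Function.update_of_ne hi] at this

lemma IsMeshEntity.comp_nonempty {d : ℕ} {N : Fin d → ℕ} {E : Box d} (hE : IsMeshEntity N E)
    (k : Fin d) : (E k).Nonempty := by
  rcases hE k with ⟨n, -, h⟩ | ⟨a, b, hab, -, h⟩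
  · rw [h]; exact Set.singleton_nonempty _
  · rw [h, Set.nonempty_Ioo]; exact_mod_cast hab

lemma IsMeshEntity.comp_subset {d : ℕ} {N : Fin d → ℕ} {E : Box d} (hE : IsMeshEntity N E)
    (k : Fin d) : E k ⊆ Set.Icc 0 (N k : ℝ) := by
  rcases hE k with ⟨n, hn, h⟩ | ⟨a, b, hab, hb, h⟩
  · rw [h, Set.singleton_subset_iff]
    exact ⟨Nat.cast_nonneg _, by exact_mod_cast hn⟩
  · rw [h]
    exact Set.Ioo_subset_Icc_self.trans
      (Set.Icc_subset_Icc (Nat.cast_nonneg _) (by exact_mod_cast hb))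

/-- No knot lies inside an interval component: a hyperface through such a point would have
closure meeting the entity, hence containing it. -/
lemma not_mem_gv {d : ℕ} {N : Fin d → ℕ} {T : TMesh d N} {G : Fin d → Finset ℕ}
    (hG : MeshInv G T.entities) {E : Box d} (hE : E ∈ T.entities) {k : Fin d} {a b n : ℕ}
    (hab : E k = Set.Ioo (a : ℝ) b) (han : a < n) (hnb : n < b) : n ∉ gv T k E := by
  rintro ⟨-, hsub⟩
  choose y hy using fun i => (T.mem_entity E hE).comp_nonempty i
  have hnE : (n : ℝ) ∈ E k := by
    rw [hab]
    exact ⟨by exact_mod_cast han, by exact_mod_cast hnb⟩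
  have hx : ∀ i, Function.update y k (n : ℝ) i ∈ E i := by
    intro i
    by_cases hi : i = k
    · subst hi; simpa using hnE
    · simpa [hi] using hy i
  have hmem : Function.update y k (n : ℝ) ∈ toSet (proj E k n) := by
    rw [mem_toSet]
    intro i
    by_cases hi : i = k
    · subst hi; simp [proj]
    · simpa [hi, proj] using hy i
  have h1 := hsub hmem
  rw [skel_eq_skelOf] at h1
  obtain ⟨F, hF, ⟨r, hr⟩, -, hxF⟩ := h1
  have h2 := hG.closed E hE F hF (fun i => ⟨_, hx i, hxF i⟩) k
  rw [hr, closure_singleton, hab] at h2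
  have hlt : (a : ℝ) < b := by exact_mod_cast han.trans hnb
  exact (Set.Ioo_infinite hlt) ((Set.finite_singleton r).subset h2)

lemma Admissible.mem_gv {d : ℕ} {N p : Fin d → ℕ} {T : TMesh d N} (h : Admissible p T)
    {E : Box d} (hE : E ∈ T.entities) {k : Fin d} {n : ℕ} (hn : n ≤ N k)
    (hf : n ≤ halfdeg p k ∨ N k - halfdeg p k ≤ n) : n ∈ gv T k E := by
  refine ⟨hn, fun x hx => h.2 k n (hf.imp id fun h => ⟨h, hn⟩) ?_⟩
  rw [mem_toSet] at hx
  have hxk : x k = n := by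
    have := hx k
    simpa [proj] using this
  refine ⟨fun i _ => ?_, hxk⟩
  by_cases hi : i = k
  · subst hi
    rw [hxk]
    exact ⟨Nat.cast_nonneg _, by exact_mod_cast hn⟩
  · have := hx i
    rw [proj, Function.update_of_ne hi] at this
    exact (T.mem_entity E hE).comp_subset i this

/-! ### Local knot vectors -/

lemma exists_initial {S : Finset ℕ} {q : ℕ} (hq : q ≤ S.card) :
    ∃ L ⊆ S, L.card = q ∧ ∀ x ∈ S, ∀ y ∈ L, x ≤ y → x ∈ L := by
  induction q with
  | zero => exact ⟨∅, by simp⟩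
  | succ q ih =>
    obtain ⟨L, hL, hc, h⟩ := ih (by omega)
    have hne : (S \ L).Nonempty := by
      rw [← Finset.card_pos, Finset.card_sdiff_of_subset hL]
      omega
    have hmin := Finset.min'_mem _ hne
    rw [Finset.mem_sdiff] at hmin
    refine ⟨insert ((S \ L).min' hne) L, Finset.insert_subset hmin.1 hL, ?_, ?_⟩
    · rw [Finset.card_insert_of_notMem hmin.2, hc]
    · intro x hx y hy hxy
      by_cases hxL : x ∈ L
      · exact Finset.mem_insert_of_mem hxL
      rcases Finset.mem_insert.1 hy with rfl | hy
      · exact Finset.mem_insert.2 (Or.inl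
          (le_antisymm hxy (Finset.min'_le _ _ (Finset.mem_sdiff.2 ⟨hx, hxL⟩))))
      · exact absurd (h x hx y hy hxy) hxL

lemma exists_final {S : Finset ℕ} {q : ℕ} (hq : q ≤ S.card) :
    ∃ L ⊆ S, L.card = q ∧ ∀ x ∈ S, ∀ y ∈ L, y ≤ x → x ∈ L := by
  induction q with
  | zero => exact ⟨∅, by simp⟩
  | succ q ih =>
    obtain ⟨L, hL, hc, h⟩ := ih (by omega)
    have hne : (S \ L).Nonempty := by
      rw [← Finset.card_pos, Finset.card_sdiff_of_subset hL]
      omega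
    have hmax := Finset.max'_mem _ hne
    rw [Finset.mem_sdiff] at hmax
    refine ⟨insert ((S \ L).max' hne) L, Finset.insert_subset hmax.1 hL, ?_, ?_⟩
    · rw [Finset.card_insert_of_notMem hmax.2, hc]
    · intro x hx y hy hxy
      by_cases hxL : x ∈ L
      · exact Finset.mem_insert_of_mem hxL
      rcases Finset.mem_insert.1 hy with rfl | hy
      · exact Finset.mem_insert.2 (Or.inl
          (le_antisymm (Finset.le_max' _ _ (Finset.mem_sdiff.2 ⟨hx, hxL⟩)) hxy))
      · exact absurd (h x hx y hy hxy) hxL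

/-- A block with `h` entries before `a` and `q` entries after `a` exists if the knot vector has
that many entries on each side. -/
lemma exists_block {K : Set ℕ} (hK : K.Finite) {a h q : ℕ} (ha : a ∈ K)
    (hlow : ∃ S : Finset ℕ, S.card = h ∧ ∀ s ∈ S, s ∈ K ∧ s < a)
    (hup : ∃ S : Finset ℕ, S.card = q ∧ ∀ s ∈ S, s ∈ K ∧ a < s) :
    ∃ V, IsBlockOf V K ∧ V.ncard = h + 1 + q ∧ a ∈ V ∧ {v ∈ V | v < a}.ncard = h := by
  lift K to Finset ℕ using hK
  obtain ⟨S₁, hS₁, hS₁'⟩ := hlow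
  obtain ⟨S₂, hS₂, hS₂'⟩ := hup
  simp only [Finset.mem_coe] at *
  have c1 : h ≤ (K.filter (· < a)).card := by
    rw [← hS₁]
    exact Finset.card_le_card fun s hs => by simpa using hS₁' s hs
  have c2 : q ≤ (K.filter (a < ·)).card := by
    rw [← hS₂]
    exact Finset.card_le_card fun s hs => by simpa using hS₂' s hs
  obtain ⟨L, hL, hLc, hLf⟩ := exists_final c1
  obtain ⟨U, hU, hUc, hUi⟩ := exists_initial c2
  have hL' : ∀ x ∈ L, x ∈ K ∧ x < a := fun x hx => by simpa using hL hx
  have hU' : ∀ x ∈ U, x ∈ K ∧ a < x := fun x hx => by simpa using hU hx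
  have hLU : Disjoint L (insert a U) := by
    rw [Finset.disjoint_left]
    intro x hx hx'
    have h1 := (hL' x hx).2
    rcases Finset.mem_insert.1 hx' with rfl | hx'
    · omega
    · have := (hU' x hx').2
      omega
  have haU : a ∉ U := fun h => lt_irrefl _ (hU' a h).2
  have hV : ∀ x, x ∈ L ∪ insert a U ↔ x ∈ L ∨ x = a ∨ x ∈ U := by
    intro x
    rw [Finset.mem_union, Finset.mem_insert]
  refine ⟨((L ∪ insert a U : Finset ℕ) : Set ℕ), ⟨?_, Finset.finite_toSet _, ?_⟩, ?_, ?_, ?_⟩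
  · intro x hx
    rw [Finset.mem_coe, hV] at hx
    rcases hx with hx | rfl | hx
    · exact (hL' x hx).1
    · exact ha
    · exact (hU' x hx).1
  · intro g hg x hx y hy hxg hgy
    rw [Finset.mem_coe, hV] at hx hy ⊢
    rcases lt_trichotomy g a with h1 | h1 | h1
    · left
      rcases hx with hx | rfl | hx
      · exact hLf g (by simp; exact ⟨hg, h1⟩) x hx hxg
      · omega
      · have := (hU' x hx).2
        omega
    · exact Or.inr (Or.inl h1)
    · right; right
      rcases hy with hy | rfl | hy
      · have := (hL' y hy).2
        omega
      · omega
      · exact hUi g (by simp; exact ⟨hg, h1⟩) y hy hgy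
  · rw [Set.ncard_coe_finset, Finset.card_union_of_disjoint hLU,
      Finset.card_insert_of_notMem haU, hLc, hUc]
    omega
  · simp
  · have : {v ∈ ((L ∪ insert a U : Finset ℕ) : Set ℕ) | v < a} = (L : Set ℕ) := by
      ext x
      constructor
      · rintro ⟨hx, hxa⟩
        rw [Finset.mem_coe, hV] at hx
        rcases hx with hx | rfl | hx
        · exact hx
        · omega
        · have := (hU' x hx).2
          omega
      · intro hx
        exact ⟨by rw [Finset.mem_coe, hV]; exact Or.inl hx, (hL' x hx).2⟩
    rw [this, Set.ncard_coe_finset, hLc]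

/-- The components of an anchor: a point in odd degree, an interval in even degree, located in
the active region. -/
lemma IsAnchor.comp {d : ℕ} {N p : Fin d → ℕ} {T : TMesh d N} {A : Box d} (hA : IsAnchor p T A)
    (k : Fin d) :
    (Odd (p k) ∧ ∃ n : ℕ, A k = {(n : ℝ)} ∧ halfdeg p k ≤ n ∧ n + halfdeg p k ≤ N k) ∨
    (Even (p k) ∧ ∃ a b : ℕ, A k = Set.Ioo (a : ℝ) b ∧ a < b ∧ halfdeg p k ≤ a ∧
      b + halfdeg p k ≤ N k) := by
  obtain ⟨hT, hAR, hodd⟩ := hA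
  have hsub : A k ⊆ Set.Icc (halfdeg p k : ℝ) ((N k : ℝ) - halfdeg p k) := by
    intro t ht
    choose y hy using fun i => (T.mem_entity A hT).comp_nonempty i
    have hx : Function.update y k t ∈ toSet A := by
      rw [mem_toSet]
      intro i
      by_cases hi : i = k
      · subst hi; simpa using ht
      · simpa [hi] using hy i
    have := hAR hx k (Set.mem_univ k)
    simpa only [Function.update_self] using this
  rcases T.mem_entity A hT k with ⟨n, -, h⟩ | ⟨a, b, hab, -, h⟩
  · left
    refine ⟨(hodd k).1 ⟨_, h⟩, n, h, ?_⟩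
    rw [h, Set.singleton_subset_iff] at hsub
    refine ⟨by exact_mod_cast hsub.1, ?_⟩
    have : (n : ℝ) + halfdeg p k ≤ N k := by linarith [hsub.2]
    exact_mod_cast this
  · right
    have hlt : (a : ℝ) < b := by exact_mod_cast hab
    have hne : ¬ Odd (p k) := fun ho => by
      have := (hodd k).2 ho
      rw [h] at this
      exact Ioo_ne_singleton hlt this
    refine ⟨Nat.not_odd_iff_even.1 hne, a, b, h, hab, ?_⟩
    have h2 : Set.Icc (a : ℝ) b ⊆ Set.Icc (halfdeg p k : ℝ) ((N k : ℝ) - halfdeg p k) := by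
      rw [← closure_Ioo hlt.ne, ← h]
      exact closure_minimal hsub isClosed_Icc
    obtain ⟨h3, h4⟩ := (Set.Icc_subset_Icc_iff hlt.le).1 h2
    refine ⟨by exact_mod_cast h3, ?_⟩
    have : (b : ℝ) + halfdeg p k ≤ N k := by linarith
    exact_mod_cast this

/-- The frame slices supply enough knots on both sides of `inf A_k`, so `anchorKV` takes its
intended value. -/
lemma isAnchorKV_anchorKV {d : ℕ} {N p : Fin d → ℕ} {T : TMesh d N} {G : Fin d → Finset ℕ}
    (hadm : Admissible p T) (hG : MeshInv G T.entities) {A : Box d} (hA : IsAnchor p T A)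
    (k : Fin d) : IsAnchorKV T p A k (anchorKV T p A k) := by
  have hex : ∃ V, IsAnchorKV T p A k V := by
    have hlow : ∀ a, halfdeg p k ≤ a → halfdeg p k ≤ N k →
        ∃ S : Finset ℕ, S.card = halfdeg p k ∧ ∀ s ∈ S, s ∈ gv T k A ∧ s < a := by
      intro a ha hN
      refine ⟨Finset.range (halfdeg p k), by simp, fun s hs => ?_⟩
      rw [Finset.mem_range] at hs
      exact ⟨hadm.mem_gv hA.1 (by omega) (Or.inl (by omega)), by omega⟩
    rcases hA.comp k with ⟨hodd, n, hn, h1, h2⟩ | ⟨heven, a, b, hab, hlt, h1, h2⟩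
    · obtain ⟨V, hV, hc, ha, hr⟩ := exists_block (gv_finite T k A) (a := n) (h := halfdeg p k)
        (q := halfdeg p k)
        (mem_gv_of_frontier hG hA.1 (by omega) (by
          rw [hn, isClosed_singleton.frontier_eq, interior_singleton]; simp))
        (hlow n h1 (by omega))
        ⟨Finset.Ioc (N k - halfdeg p k) (N k), by rw [Nat.card_Ioc]; omega, fun s hs => by
          rw [Finset.mem_Ioc] at hs
          exact ⟨hadm.mem_gv hA.1 hs.2 (Or.inr hs.1.le), by omega⟩⟩
      refine ⟨V, hV, ?_, n, ?_, ha, hr⟩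
      · rw [hc, halfdeg]
        obtain ⟨t, ht⟩ := hodd
        omega
      · rw [hn, csInf_singleton]
    · have hlt' : (a : ℝ) < b := by exact_mod_cast hlt
      obtain ⟨V, hV, hc, ha, hr⟩ := exists_block (gv_finite T k A) (a := a) (h := halfdeg p k)
        (q := halfdeg p k + 1)
        (mem_gv_of_frontier hG hA.1 (by omega) (by rw [hab, frontier_Ioo hlt']; simp))
        (hlow a h1 (by omega))
        ⟨Finset.Icc (N k - halfdeg p k) (N k), by rw [Nat.card_Icc]; omega, fun s hs => by
          rw [Finset.mem_Icc] at hs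
          exact ⟨hadm.mem_gv hA.1 hs.2 (Or.inr hs.1), by omega⟩⟩
      refine ⟨V, hV, ?_, a, ?_, ha, hr⟩
      · rw [hc, halfdeg]
        obtain ⟨t, ht⟩ := heven
        omega
      · rw [hab, csInf_Ioo hlt']
  rw [anchorKV, dif_pos hex]
  exact hex.choose_spec

lemma rank_inj {V : Set ℕ} (hV : V.Finite) {a b : ℕ} (ha : a ∈ V) (hb : b ∈ V)
    (h : {v ∈ V | v < a}.ncard = {v ∈ V | v < b}.ncard) : a = b := by
  have key : ∀ a b, a ∈ V → a < b → {v ∈ V | v < a}.ncard < {v ∈ V | v < b}.ncard := by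
    intro a b ha hab
    refine Set.ncard_lt_ncard ?_ (hV.subset fun _ h => h.1)
    refine ⟨fun v hv => ⟨hv.1, hv.2.trans hab⟩, fun hsub => ?_⟩
    exact lt_irrefl a (hsub (show a ∈ {v ∈ V | v < b} from ⟨ha, hab⟩)).2
  rcases lt_trichotomy a b with h' | h' | h'
  · exact absurd h (key a b ha h').ne
  · exact h'
  · exact absurd h (key b a hb h').ne'

/-- The component of an anchor is determined by its local knot vector: its infimum is the entry
of rank `⌊(p_k+1)/2⌋`, and, for an interval, its supremum is the next entry. -/
lemma comp_eq_of_anchorKV_eq {d : ℕ} {N p : Fin d → ℕ} {T : TMesh d N} {G : Fin d → Finset ℕ}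
    (hadm : Admissible p T) (hG : MeshInv G T.entities) {A B : Box d} (hA : IsAnchor p T A)
    (hB : IsAnchor p T B) {k : Fin d} (h : anchorKV T p A k = anchorKV T p B k) :
    A k = B k := by
  have hVA := isAnchorKV_anchorKV hadm hG hA k
  have hVB := isAnchorKV_anchorKV hadm hG hB k
  rw [← h] at hVB
  set V := anchorKV T p A k
  obtain ⟨hbA, hcard, a, haA, haV, hra⟩ := hVA
  obtain ⟨hbB, -, a', haB, haV', hra'⟩ := hVB
  obtain rfl : a = a' := rank_inj hbA.2.1 haV haV' (hra.trans hra'.symm)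
  rcases hA.comp k with ⟨hodd, n, hn, -⟩ | ⟨heven, a₁, b₁, hab₁, hlt₁, -, hN₁⟩
  · rcases hB.comp k with ⟨-, n', hn', -⟩ | ⟨heven, -⟩
    · rw [hn, csInf_singleton] at haA
      rw [hn', csInf_singleton] at haB
      rw [hn, hn', ← haA, haB]
    · exact absurd hodd (Nat.not_odd_iff_even.2 heven)
  · rcases hB.comp k with ⟨hodd, -⟩ | ⟨-, a₂, b₂, hab₂, hlt₂, -, hN₂⟩
    · exact absurd hodd (Nat.not_odd_iff_even.2 heven)
    have hlt₁' : (a₁ : ℝ) < b₁ := by exact_mod_cast hlt₁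
    have hlt₂' : (a₂ : ℝ) < b₂ := by exact_mod_cast hlt₂
    rw [hab₁, csInf_Ioo hlt₁'] at haA
    rw [hab₂, csInf_Ioo hlt₂'] at haB
    obtain rfl : a = a₁ := by exact_mod_cast haA
    obtain rfl : a = a₂ := by exact_mod_cast haB
    -- There is an entry beyond `a`, since `a` and the entries below it are at most `p k + 1` many.
    obtain ⟨c, hcV, hac⟩ : ∃ c ∈ V, a < c := by
      by_contra! hcon
      have hsub : V ⊆ insert a {v ∈ V | v < a} := by
        intro v hv
        rcases (hcon v hv).lt_or_eq with h' | h'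
        · exact Or.inr ⟨hv, h'⟩
        · exact Or.inl h'
      have h1 := Set.ncard_le_ncard hsub
        ((hbA.2.1.subset fun _ h => h.1 : {v ∈ V | v < a}.Finite).insert a)
      have h2 := Set.ncard_insert_le a {v ∈ V | v < a}
      rw [hra, halfdeg] at h2
      rw [hcard] at h1
      omega
    have mem : ∀ E : Box d, E ∈ T.entities → IsBlockOf V (gv T k E) → ∀ b : ℕ,
        E k = Set.Ioo (a : ℝ) b → a < b → b ≤ N k → b ∈ V := by
      intro E hE hbl b hb hab hbN
      have hg : b ∈ gv T k E := mem_gv_of_frontier hG hE hbN (by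
        rw [hb, frontier_Ioo (by exact_mod_cast hab)]; simp)
      have hbc : b ≤ c := by
        by_contra! hlt
        exact not_mem_gv hG hE hb hac hlt (hbl.1 hcV)
      exact hbl.2.2 b hg a haV c hcV hab.le hbc
    have hb₁ := mem A hA.1 hbA b₁ hab₁ hlt₁ (by omega)
    have hb₂ := mem B hB.1 hbB b₂ hab₂ hlt₂ (by omega)
    have hle₁ : b₁ ≤ b₂ := by
      by_contra! hlt
      exact not_mem_gv hG hA.1 hab₁ hlt₂ hlt (hbA.1 hb₂)
    have hle₂ : b₂ ≤ b₁ := by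
      by_contra! hlt
      exact not_mem_gv hG hB.1 hab₂ hlt₁ hlt (hbB.1 hb₁)
    rw [hab₁, hab₂, le_antisymm hle₁ hle₂]

/-! ### Overlap of local knot vectors -/

lemma mem_convOf_of_between {V : Set ℕ} {a b g : ℕ} (ha : a ∈ V) (hb : b ∈ V) (hag : a ≤ g)
    (hgb : g ≤ b) : (g : ℝ) ∈ convOf V := by
  have hc : (convOf V).OrdConnected := (convex_convexHull ℝ _).ordConnected
  have h1 : (a : ℝ) ∈ convOf V := subset_convexHull ℝ _ ⟨a, ha, rfl⟩
  have h2 : (b : ℝ) ∈ convOf V := subset_convexHull ℝ _ ⟨b, hb, rfl⟩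
  exact hc.out h1 h2 ⟨by exact_mod_cast hag, by exact_mod_cast hgb⟩

/-- Knot vectors with disjoint convex hulls are blocks of their union. -/
lemma overlaps_of_disjoint {V W : Set ℕ} (hV : V.Finite) (hW : W.Finite)
    (h : convOf V ∩ convOf W = ∅) : Overlaps V W := by
  have hno : ∀ r : ℝ, r ∈ convOf V → r ∈ convOf W → False := by
    intro r h1 h2
    have : r ∈ convOf V ∩ convOf W := ⟨h1, h2⟩
    rw [h] at this
    exact this
  refine ⟨V ∪ W, hV.union hW, ⟨Set.subset_union_left, hV, ?_⟩, ⟨Set.subset_union_right, hW, ?_⟩⟩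
  · rintro g (hg | hg) a ha b hb hag hgb
    · exact hg
    · exact (hno g (mem_convOf_of_between ha hb hag hgb)
        (mem_convOf_of_between hg hg le_rfl le_rfl)).elim
  · rintro g (hg | hg) a ha b hb hag hgb
    · exact (hno g (mem_convOf_of_between hg hg le_rfl le_rfl)
        (mem_convOf_of_between ha hb hag hgb)).elim
    · exact hg

end TSpline

/-- For an admissible T-mesh, strong dual-compatibility implies weak
dual-compatibility. -/
theorem TSpline.sdc_implies_wdc
    {d : ℕ} {N p : Fin d → ℕ} (T : TSpline.TMesh d N)
    (hadm : TSpline.Admissible p T) (hsdc : TSpline.SDC T p) :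
    TSpline.WDC T p := by
  obtain ⟨G, hG⟩ := T.exists_meshInv hadm.pos
  intro A B hA hB hne
  have hKA := isAnchorKV_anchorKV hadm hG hA
  have hKB := isAnchorKV_anchorKV hadm hG hB
  rcases hsdc A B hA hB hne with hdisj | hcard
  · obtain ⟨k, hk⟩ : ∃ k, convOf (anchorKV T p A k) ∩ convOf (anchorKV T p B k) = ∅ := by
      by_contra! hcon
      choose x hx using hcon
      have : x ∈ suppA T p A ∩ suppA T p B := ⟨fun k _ => (hx k).1, fun k _ => (hx k).2⟩
      rw [hdisj] at this
      exact this
    refine ⟨k, fun heq => ?_, overlaps_of_disjoint (hKA k).1.2.1 (hKB k).1.2.1 hk⟩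
    obtain ⟨-, -, a, -, ha, -⟩ := hKA k
    rw [← heq, Set.inter_self] at hk
    have := mem_convOf_of_between ha ha le_rfl le_rfl
    rw [hk] at this
    exact this
  · by_contra hW
    have hov : ∀ k, Overlaps (anchorKV T p A k) (anchorKV T p B k) → A k = B k := by
      intro k hk
      refine comp_eq_of_anchorKV_eq hadm hG hA hB ?_
      by_contra h
      exact hW ⟨k, h, hk⟩
    -- All directions other than a suitable `j` are overlapping.
    obtain ⟨j, hj⟩ : ∃ j : Fin d, ∀ k, k ≠ j →
        Overlaps (anchorKV T p A k) (anchorKV T p B k) := by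
      set S := {k : Fin d | Overlaps (anchorKV T p A k) (anchorKV T p B k)} with hS
      by_cases hall : ∃ j, j ∉ S
      · obtain ⟨j, hj⟩ := hall
        refine ⟨j, fun k hk => ?_⟩
        by_contra hkS
        have h1 := Set.ncard_add_ncard_compl S
        rw [Nat.card_eq_fintype_card, Fintype.card_fin] at h1
        have h2 : Sᶜ.ncard ≤ 1 := by omega
        exact hk ((Set.ncard_le_one (Set.toFinite _)).1 h2 k hkS j hj)
      · obtain ⟨j, -⟩ := Function.ne_iff.1 hne
        refine ⟨j, fun k _ => ?_⟩
        by_contra hk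
        exact hall ⟨k, hk⟩
    have heq : ∀ k, k ≠ j → A k = B k := fun k hk => hov k (hj k hk)
    -- `gv T j` ignores the `j`-th component, so the knot vectors in direction `j` are blocks of
    -- one and the same global knot vector.
    have hjo : Overlaps (anchorKV T p A j) (anchorKV T p B j) :=
      ⟨gv T j A, gv_finite T j A, (hKA j).1, by rw [gv_congr T heq]; exact (hKB j).1⟩
    refine hne (funext fun k => ?_)
    by_cases hk : k = j
    · rw [hk]; exact hov j hjo
    · exact heq k hk
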